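/- Let d = 2κ be even and let γ_d¹, …, γ_d^{d+1} be the Dirac matrices of size 2^κ given by the recursive construction. Then for every permutation σ of {1, …, d+1}, trace( γ_d^{σ(1)} · γ_d^{σ(2)} · ⋯ · γ_d^{σ(d+1)} ) = (2i)^{d/2} · sgn(σ). -/

import Mathlib

open Matrix

/-- Pauli matrix σ₁. -/
noncomputable def pauli1 : Matrix (Fin 2) (Fin 2) ℂ := !![0, 1; 1, 0]

/-- Pauli matrix σ₂. -/
noncomputable def pauli2 : Matrix (Fin 2) (Fin 2) ℂ := !![0, -Complex.I; Complex.I, 0]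

/-- Pauli matrix σ₃. -/
noncomputable def pauli3 : Matrix (Fin 2) (Fin 2) ℂ := !![1, 0; 0, -1]

/-- Re-index a square matrix along an equality of dimensions. -/
noncomputable def castSq {m n : ℕ} (h : m = n) (A : Matrix (Fin m) (Fin m) ℂ) :
    Matrix (Fin n) (Fin n) ℂ :=
  Matrix.reindex (finCongr h) (finCongr h) A

/-- Kronecker product of a 2×2 matrix with an n×n matrix, with indices flattened. -/
noncomputable def kron2 {n : ℕ} (A : Matrix (Fin 2) (Fin 2) ℂ) (B : Matrix (Fin n) (Fin n) ℂ) :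
    Matrix (Fin (2 * n)) (Fin (2 * n)) ℂ :=
  Matrix.reindex finProdFinEquiv finProdFinEquiv (Matrix.kroneckerMap (· * ·) A B)

/-- The recursively constructed Dirac matrices: `diracGamma κ j` is the `j`-th Dirac matrix
(1-indexed, `1 ≤ j ≤ 2κ+1`) of size `2^κ`. For κ = 1 these are the Pauli matrices; the
recursion is `γ_{d+2}^j = σ₁ ⊗ γ_d^j` (`1 ≤ j ≤ d+1`), `γ_{d+2}^{d+2} = σ₂ ⊗ I`,
`γ_{d+2}^{d+3} = σ₃ ⊗ I` for `d = 2κ`. -/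
noncomputable def diracGamma : (κ : ℕ) → ℕ → Matrix (Fin (2 ^ κ)) (Fin (2 ^ κ)) ℂ
  | 0, _ => 1
  | 1, j => castSq (by norm_num)
      (if j = 1 then pauli1 else if j = 2 then pauli2 else if j = 3 then pauli3 else 1)
  | (κ + 2), j => castSq (by rw [pow_succ]; ring)
      (if j ≤ 2 * (κ + 1) + 1 then kron2 pauli1 (diracGamma (κ + 1) j)
       else if j = 2 * (κ + 1) + 2 then kron2 pauli2 1
       else if j = 2 * (κ + 1) + 3 then kron2 pauli3 1
       else 1)

lemma ofFn_prod_swap {R : Type*} [Ring R] : ∀ (n : ℕ) (f : Fin (n + 1) → R)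
    (_ : ∀ i j, i ≠ j → f i * f j = - (f j * f i)) (i : Fin n),
    (List.ofFn fun k => f (Equiv.swap i.castSucc i.succ k)).prod = - (List.ofFn f).prod := by
  intro n
  induction n with
  | zero => intro f _ i; exact i.elim0
  | succ n ih =>
    intro f hf i
    refine Fin.cases ?_ (fun i => ?_) i
    · have h0 : Equiv.swap (Fin.castSucc (0 : Fin (n+1))) (Fin.succ 0) 0 = Fin.succ 0 :=
        Equiv.swap_apply_left _ _
      have h1 : Equiv.swap (Fin.castSucc (0 : Fin (n+1))) (Fin.succ 0) (Fin.succ 0) = 0 :=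
        Equiv.swap_apply_right _ _
      have h2 : ∀ k : Fin n, Equiv.swap (Fin.castSucc (0 : Fin (n+1))) (Fin.succ 0) k.succ.succ
          = k.succ.succ := fun k => Equiv.swap_apply_of_ne_of_ne
            (Fin.succ_ne_zero _) (fun h => Fin.succ_ne_zero _ (Fin.succ_injective _ h))
      simp only [List.ofFn_succ, List.prod_cons, h0, h1, h2]
      rw [← mul_assoc, ← mul_assoc, hf (Fin.succ 0) 0 (Fin.succ_ne_zero _), neg_mul]
    · have h0 : Equiv.swap (Fin.castSucc (Fin.succ i)) (Fin.succ (Fin.succ i)) 0 = 0 :=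
        Equiv.swap_apply_of_ne_of_ne (by simp [Fin.ext_iff]) (Fin.succ_ne_zero _).symm
      have h1 : ∀ k : Fin (n+1), Equiv.swap (Fin.castSucc (Fin.succ i)) (Fin.succ (Fin.succ i)) k.succ
          = (Equiv.swap i.castSucc i.succ k).succ := by
        intro k
        rw [← Fin.succ_castSucc]
        exact (Fin.succ_injective _).swap_apply _ _ _
      rw [List.ofFn_succ, List.ofFn_succ (f := f)]
      simp only [List.prod_cons, h0, h1]
      rw [ih (fun k => f k.succ) (fun a b hab => hf _ _ (fun h => hab (Fin.succ_injective _ h))) i,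
        mul_neg]

lemma ofFn_prod_perm {R : Type*} [Ring R] (n : ℕ) (σ : Equiv.Perm (Fin (n + 1))) :
    ∀ (f : Fin (n + 1) → R) (_ : ∀ i j, i ≠ j → f i * f j = - (f j * f i)),
    (List.ofFn fun k => f (σ k)).prod = (Equiv.Perm.sign σ : ℤ) • (List.ofFn f).prod := by
  have hσ : σ ∈ Submonoid.closure (Set.range fun i : Fin n => Equiv.swap i.castSucc i.succ) := by
    rw [Equiv.Perm.mclosure_swap_castSucc_succ]; trivial
  induction hσ using Submonoid.closure_induction with
  | mem x hx =>
    obtain ⟨i, rfl⟩ := hx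
    intro f hf
    simp only
    rw [ofFn_prod_swap n f hf i, Equiv.Perm.sign_swap (Fin.castSucc_lt_succ).ne]
    simp
  | one => intro f hf; simp
  | mul x y _ _ hx hy =>
    intro f hf
    have := hy (fun k => f (x k)) (fun a b hab => hf _ _ (fun h => hab (x.injective h)))
    simp only [Equiv.Perm.mul_apply]
    rw [this, hx f hf, smul_smul, Equiv.Perm.sign_mul, Units.val_mul, mul_comm]

lemma castSq_mul {m n : ℕ} (h : m = n) (A B : Matrix (Fin m) (Fin m) ℂ) :
    castSq h A * castSq h B = castSq h (A * B) := by
  subst h; rfl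

lemma castSq_one {m n : ℕ} (h : m = n) : castSq h 1 = 1 := by
  subst h; rfl

lemma castSq_neg {m n : ℕ} (h : m = n) (A : Matrix (Fin m) (Fin m) ℂ) :
    castSq h (-A) = - castSq h A := by
  subst h; rfl

lemma castSq_smul {m n : ℕ} (h : m = n) (c : ℂ) (A : Matrix (Fin m) (Fin m) ℂ) :
    castSq h (c • A) = c • castSq h A := by
  subst h; rfl

lemma kron2_mul {n : ℕ} (A B : Matrix (Fin 2) (Fin 2) ℂ) (C D : Matrix (Fin n) (Fin n) ℂ) :
    kron2 A C * kron2 B D = kron2 (A * B) (C * D) := by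
  have := Matrix.mul_kronecker_mul A B C D
  unfold kron2
  rw [this]
  simp [Matrix.reindex_apply, Matrix.submatrix_mul_equiv]

lemma kron2_one {n : ℕ} : kron2 1 (1 : Matrix (Fin n) (Fin n) ℂ) = 1 := by
  have := Matrix.one_kronecker_one (α := ℂ) (m := Fin 2) (n := Fin n)
  unfold kron2
  rw [this]
  simp [Matrix.reindex_apply]

lemma kron2_smul_left {n : ℕ} (c : ℂ) (A : Matrix (Fin 2) (Fin 2) ℂ)
    (B : Matrix (Fin n) (Fin n) ℂ) : kron2 (c • A) B = c • kron2 A B := by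
  ext i j; simp [kron2, mul_assoc]

lemma kron2_smul_right {n : ℕ} (c : ℂ) (A : Matrix (Fin 2) (Fin 2) ℂ)
    (B : Matrix (Fin n) (Fin n) ℂ) : kron2 A (c • B) = c • kron2 A B := by
  ext i j; simp [kron2, mul_left_comm]

lemma kron2_neg_left {n : ℕ} (A : Matrix (Fin 2) (Fin 2) ℂ)
    (B : Matrix (Fin n) (Fin n) ℂ) : kron2 (-A) B = - kron2 A B := by
  ext i j; simp [kron2]

lemma kron2_neg_right {n : ℕ} (A : Matrix (Fin 2) (Fin 2) ℂ)
    (B : Matrix (Fin n) (Fin n) ℂ) : kron2 A (-B) = - kron2 A B := by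
  ext i j; simp [kron2]

lemma p11 : pauli1 * pauli1 = 1 := by
  ext i j; fin_cases i <;> fin_cases j <;> simp [pauli1]
lemma p12 : pauli1 * pauli2 = -(pauli2 * pauli1) := by
  ext i j; fin_cases i <;> fin_cases j <;> simp [pauli1, pauli2]
lemma p13 : pauli1 * pauli3 = -(pauli3 * pauli1) := by
  ext i j; fin_cases i <;> fin_cases j <;> simp [pauli1, pauli3]
lemma p23 : pauli2 * pauli3 = -(pauli3 * pauli2) := by
  ext i j; fin_cases i <;> fin_cases j <;> simp [pauli2, pauli3]
lemma p123 : pauli1 * pauli2 * pauli3 = Complex.I • 1 := by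
  ext i j; fin_cases i <;> fin_cases j <;> simp [pauli1, pauli2, pauli3]

lemma dirac_anti_lt : ∀ (κ : ℕ) (i j : ℕ), i < j → j < 2 * (κ + 1) + 1 →
    diracGamma (κ + 1) (i + 1) * diracGamma (κ + 1) (j + 1)
      = - (diracGamma (κ + 1) (j + 1) * diracGamma (κ + 1) (i + 1)) := by
  intro κ
  induction κ with
  | zero =>
    intro i j hij hj
    have : (i = 0 ∧ j = 1) ∨ (i = 0 ∧ j = 2) ∨ (i = 1 ∧ j = 2) := by omega
    rcases this with ⟨rfl, rfl⟩ | ⟨rfl, rfl⟩ | ⟨rfl, rfl⟩ <;>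
    simp only [diracGamma, castSq_mul, ← castSq_neg] <;> norm_num [p12, p13, p23]
  | succ κ ih =>
    intro i j hij hj
    simp only [diracGamma, castSq_mul, ← castSq_neg]
    congr 1
    by_cases h1 : j < 2 * (κ + 1) + 1
    · rw [if_pos (by omega), if_pos (by omega), kron2_mul, kron2_mul, ih i j hij h1,
        kron2_neg_right]
    · by_cases h2 : j = 2 * (κ + 1) + 1
      · subst h2
        rw [if_pos (by omega), if_neg (by omega), if_pos (by omega), kron2_mul, kron2_mul, p12,
          kron2_neg_left, one_mul, mul_one]
      · have h3 : j = 2 * (κ + 1) + 2 := by omega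
        subst h3
        by_cases h4 : i = 2 * (κ + 1) + 1
        · subst h4
          rw [if_neg (by omega), if_pos (by omega), if_neg (by omega), if_neg (by omega),
            if_pos (by omega), kron2_mul, kron2_mul, p23, kron2_neg_left]
        · rw [if_pos (by omega), if_neg (by omega), if_neg (by omega), if_pos (by omega),
            kron2_mul, kron2_mul, p13, kron2_neg_left, one_mul, mul_one]

lemma prod_kron {m n : ℕ} (h : 2 * m = n) (g : ℕ → Matrix (Fin m) (Fin m) ℂ) (l : List ℕ) :
    (l.map fun j => castSq h (kron2 pauli1 (g j))).prod
      = castSq h (kron2 (pauli1 ^ l.length) (l.map g).prod) := by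
  induction l with
  | nil => simp [kron2_one, castSq_one]
  | cons a l ih =>
    simp only [List.map_cons, List.prod_cons, List.length_cons, ih, castSq_mul, kron2_mul, pow_succ']

lemma ofFn_eq_map_range {α : Type*} (n : ℕ) (g : ℕ → α) :
    (List.ofFn fun i : Fin n => g i) = (List.range n).map g := by
  apply List.ext_getElem <;> simp

lemma p_odd (k : ℕ) : pauli1 ^ (2 * k + 1) = pauli1 := by
  rw [pow_succ, pow_mul, pow_two, p11, one_pow, one_mul]

lemma dirac_prod : ∀ κ : ℕ,
    ((List.range (2 * (κ + 1) + 1)).map fun j => diracGamma (κ + 1) (j + 1)).prod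
      = Complex.I ^ (κ + 1) • 1 := by
  intro κ
  induction κ with
  | zero =>
    simp [List.range_succ, diracGamma, castSq_mul, ← mul_assoc, p123, castSq_smul, castSq_one]
  | succ κ ih =>
    have e : 2 * 2 ^ (κ + 1) = 2 ^ (κ + 2) := by rw [pow_succ]; ring
    have hl : ((List.range (2 * (κ + 1) + 1)).map fun j => diracGamma (κ + 2) (j + 1))
        = ((List.range (2 * (κ + 1) + 1)).map fun j =>
          castSq e (kron2 pauli1 (diracGamma (κ + 1) (j + 1)))) := by
      apply List.map_congr_left
      intro j hj
      rw [List.mem_range] at hj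
      rw [diracGamma, if_pos (by omega)]
    have h2 : diracGamma (κ + 2) (2 * (κ + 1) + 1 + 1) = castSq e (kron2 pauli2 1) := by
      rw [diracGamma, if_neg (by omega), if_pos (by omega)]
    have h3 : diracGamma (κ + 2) (2 * (κ + 1) + 1 + 1 + 1) = castSq e (kron2 pauli3 1) := by
      rw [diracGamma, if_neg (by omega), if_neg (by omega), if_pos (by omega)]
    rw [show 2 * (κ + 1 + 1) + 1 = (2 * (κ + 1) + 1) + 1 + 1 by ring, List.range_succ,
      List.range_succ, List.map_append, List.map_append, List.prod_append, List.prod_append]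
    simp only [List.map_cons, List.map_nil, List.prod_cons, List.prod_nil, mul_one]
    rw [show κ + 1 + 1 = κ + 2 from rfl, hl, h2, h3, prod_kron, ih, List.length_range, p_odd]
    simp only [smul_mul_assoc, castSq_mul, kron2_mul, mul_one, p123, kron2_smul_left, kron2_smul_right, kron2_one,
      castSq_smul, castSq_one, smul_smul]
    congr 1

/-- For even `d = 2κ`, the trace of a product of all `d+1` Dirac matrices in any order is
`(2i)^{d/2}` times the signature of the permutation. -/
theorem trace_dirac_perm (κ : ℕ) (hκ : 1 ≤ κ) (σ : Equiv.Perm (Fin (2 * κ + 1))) :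
    Matrix.trace ((List.ofFn fun i : Fin (2 * κ + 1) => diracGamma κ ((σ i : ℕ) + 1)).prod)
      = (2 * Complex.I) ^ κ * ((Equiv.Perm.sign σ : ℤ) : ℂ) := by
  obtain ⟨k, rfl⟩ : ∃ k, κ = k + 1 := ⟨κ - 1, by omega⟩
  have h := ofFn_prod_perm (2 * (k + 1)) σ
    (fun i : Fin (2 * (k + 1) + 1) => diracGamma (k + 1) ((i : ℕ) + 1)) (by
      intro i j hij
      rcases lt_or_gt_of_ne hij with h | h
      · exact dirac_anti_lt k i j h j.2
      · rw [dirac_anti_lt k j i h i.2, neg_neg])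
  have h' : (List.ofFn fun i : Fin (2 * (k + 1) + 1) => diracGamma (k + 1) ((i : ℕ) + 1))
      = (List.range (2 * (k + 1) + 1)).map fun j => diracGamma (k + 1) (j + 1) := by
    exact ofFn_eq_map_range _ (fun j => diracGamma (k + 1) (j + 1))
  rw [h, h', dirac_prod, Matrix.trace_smul, Matrix.trace_smul, Matrix.trace_one, Fintype.card_fin,
    zsmul_eq_mul, smul_eq_mul, mul_pow]
  push_cast
  ring
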